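/- arXiv:1101.1231 — 2 statements merged into one kernel-verified Lean document; each statement's English description precedes it below -/
import Mathlib

section
/- Let n, m be positive integers, A, Q ∈ ℂ^{n×n} with Q = Q*, B, C ∈ ℂ^{n×m}, R = R* ∈ ℂ^{m×m}. Assume the pair (A, B) is stabilizable, i.e. rank [sI − A, B] = n for all s in the closed right half-plane, and assume S_LMI = {Y = Y* : M(Y) ≥ 0} is nonempty. Then there exist p ∈ ℕ, a Hermitian X₊ ∈ ℂ^{n×n}, K ∈ ℂ^{p×n} and L ∈ ℂ^{p×m} such that (X₊, K, L) satisfies the Lur'e equations A*X₊ + X₊A + Q = K*K, X₊B + C = K*L, R = L*L, and X₊ is maximal: X₊ − Y is positive semidefinite for every Y ∈ S_LMI. -/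
open Matrix ComplexOrder

/-!
Bass' argument gives a stabilizing feedback: for large `r` there is `X ≥ 0` with
`A X + X A* + 2 r X = B B*`, and any `F` with `F X = -B*` makes `A + B F` Hurwitz, by the Hautus
test.

If `R > 0`, the LMI says that the Riccati residual is nonnegative. Kleinman's Newton iteration
replaces a stabilizing feedback, with cost matrix `P`, by the Riccati gain of `P`. This gain is
again stabilizing and its cost matrix is smaller. All cost matrices dominate every solution of the
LMI, so the iterates decrease to a limit, which solves the Riccati equation and is the greatest
solution of the LMI.

For singular `R`, the greatest solutions for `R + ε` decrease as `ε → 0` and are bounded below by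
every solution for `R`; their limit is the greatest solution for `R`. Writing the positive
semidefinite matrix `M(X)` as `N* N` and splitting the columns of `N` gives the factors `K`, `L`.
-/

open Filter Topology
open scoped MatrixOrder Matrix.Norms.L2Operator

section MonotoneConvergence

theorem exists_tendsto_of_antitone_of_bddBelow {ι α : Type*} [Preorder ι] [IsDirectedOrder ι]
    [Nonempty ι] [TopologicalSpace α] [PartialOrder α] [OrderClosedTopology α] [CompactIccSpace α]
    {f : ι → α} (hf : Antitone f) (hb : BddBelow (Set.range f)) :
    ∃ x, Tendsto f atTop (𝓝 x) := by
  obtain ⟨b, hb⟩ := hb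
  obtain ⟨i⟩ := ‹Nonempty ι›
  have mem_Icc : ∀ᶠ k in atTop, f k ∈ Set.Icc b (f i) :=
    (eventually_ge_atTop i).mono fun k hk ↦ ⟨hb ⟨k, rfl⟩, hf hk⟩
  have clusterPt_le {x : α} (hx : MapClusterPt x atTop f) (k : ι) : x ≤ f k :=
    isClosed_Iic.mem_of_mapClusterPt hx ((eventually_ge_atTop k).mono fun _ hl ↦ hf hl)
  have le_clusterPt {x y : α} (hx : MapClusterPt x atTop f) (hy : ∀ k, y ≤ f k) : y ≤ x :=
    isClosed_Ici.mem_of_mapClusterPt hx (Eventually.of_forall hy)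
  obtain ⟨x, -, hx⟩ := isCompact_Icc.exists_mapClusterPt (f := atTop) (tendsto_principal.2 mem_Icc)
  refine ⟨x, isCompact_Icc.tendsto_nhds_of_unique_mapClusterPt mem_Icc fun y _ hy ↦ ?_⟩
  exact (le_clusterPt hx (clusterPt_le hy)).antisymm (le_clusterPt hy (clusterPt_le hx))

theorem compactIccSpace_of_finiteDimensional (A : Type*) [CStarAlgebra A] [PartialOrder A]
    [StarOrderedRing A] [FiniteDimensional ℂ A] : CompactIccSpace A := by
  have : ProperSpace A := FiniteDimensional.proper ℂ A
  refine ⟨fun {a b} ↦ Metric.isCompact_of_isClosed_isBounded isClosed_Icc ?_⟩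
  refine (Metric.isBounded_closedBall (x := a) (r := ‖b - a‖)).subset fun x hx ↦ ?_
  rw [mem_closedBall_iff_norm]
  exact CStarAlgebra.norm_le_norm_of_nonneg_of_le (sub_nonneg.2 hx.1) (sub_le_sub_right hx.2 a)

end MonotoneConvergence

section Hurwitz

/-- An element of a complex algebra is *Hurwitz* when its spectrum lies in the open left
half-plane. -/
def IsHurwitz {A : Type*} [Ring A] [Algebra ℂ A] (a : A) : Prop :=
  ∀ s ∈ spectrum ℂ a, s.re < 0

protected theorem IsHurwitz.star {A : Type*} [Ring A] [StarRing A] [Algebra ℂ A] [StarModule ℂ A]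
    {a : A} (ha : IsHurwitz a) : IsHurwitz (star a) := by
  intro s hs
  rw [spectrum.map_star, Set.mem_star] at hs
  simpa using ha _ hs

theorem re_sub_one_div_add_one_nonneg {s : ℂ} (hs : 1 ≤ ‖s‖) : 0 ≤ ((s - 1) / (s + 1)).re := by
  have hnorm : 1 ≤ s.re * s.re + s.im * s.im := by
    rw [← Complex.normSq_apply, ← Complex.sq_norm]
    nlinarith
  rw [Complex.div_re, ← add_div]
  refine div_nonneg ?_ (Complex.normSq_nonneg _)
  simp only [Complex.sub_re, Complex.sub_im, Complex.add_re, Complex.add_im, Complex.one_re,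
    Complex.one_im]
  linarith

theorem IsHurwitz.norm_lt_one_of_mem_spectrum_cayley {A : Type*} [Ring A] [Algebra ℂ A] {a : A}
    (ha : IsHurwitz a) {u : Aˣ} (hu : (u : A) = 1 - a) {s : ℂ}
    (hs : s ∈ spectrum ℂ ((1 + a) * ↑u⁻¹)) : ‖s‖ < 1 := by
  by_contra! hnorm
  have hfactor : algebraMap ℂ A s - (1 + a) * ↑u⁻¹ = ((s - 1) • 1 - (s + 1) • a) * ↑u⁻¹ := by
    have : algebraMap ℂ A s = s • (1 - a) * ↑u⁻¹ := by
      rw [← hu, smul_mul_assoc, Units.mul_inv, Algebra.algebraMap_eq_smul_one]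
    rw [this, ← sub_mul]
    congr 1
    module
  rw [spectrum.mem_iff, hfactor, Units.isUnit_mul_units] at hs
  refine hs ?_
  obtain h0 | h0 := eq_or_ne (s + 1) 0
  · rw [h0, zero_smul, sub_zero, ← Algebra.algebraMap_eq_smul_one]
    refine (IsUnit.mk0 _ fun h1 ↦ ?_).map (algebraMap ℂ A)
    exact two_ne_zero (by linear_combination h0 - h1 : (2 : ℂ) = 0)
  · have hunit : IsUnit (algebraMap ℂ A ((s - 1) / (s + 1)) - a) := by
      refine spectrum.notMem_iff.1 fun hmem ↦ ?_
      exact (ha _ hmem).not_ge (re_sub_one_div_add_one_nonneg hnorm)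
    have hscale : (s - 1) • (1 : A) - (s + 1) • a =
        Units.mk0 _ h0 • (algebraMap ℂ A ((s - 1) / (s + 1)) - a) := by
      rw [Units.smul_mk0, smul_sub, Algebra.algebraMap_eq_smul_one, smul_smul, mul_div_cancel₀ _ h0]
    rw [hscale]
    exact hunit.smul _

theorem tendsto_pow_atTop_nhds_zero_of_spectralRadius_lt_one {A : Type*} [NormedRing A]
    [NormedAlgebra ℂ A] [CompleteSpace A] {a : A} (ha : spectralRadius ℂ a < 1) :
    Tendsto (fun k ↦ a ^ k) atTop (𝓝 0) := by
  obtain ⟨r, har, hr⟩ := ENNReal.lt_iff_exists_nnreal_btwn.1 ha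
  have hr1 : r < 1 := by exact_mod_cast hr
  refine squeeze_zero_norm' (a := fun k ↦ (r : ℝ) ^ k) ?_
    (tendsto_pow_atTop_nhds_zero_of_lt_one r.2 hr1)
  have hgelfand := spectrum.pow_nnnorm_pow_one_div_tendsto_nhds_spectralRadius a
  filter_upwards [hgelfand.eventually_lt_const har, eventually_gt_atTop 0] with k hk hk0
  have hroot := ENNReal.rpow_le_rpow hk.le k.cast_nonneg
  rw [← ENNReal.rpow_mul, one_div_mul_cancel (Nat.cast_ne_zero.2 hk0.ne'), ENNReal.rpow_one,
    ENNReal.rpow_natCast] at hroot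
  exact_mod_cast hroot

theorem IsHurwitz.tendsto_cayley_pow {A : Type*} [NormedRing A] [NormedAlgebra ℂ A]
    [CompleteSpace A] {a : A} (ha : IsHurwitz a) {u : Aˣ} (hu : (u : A) = 1 - a) :
    Tendsto (fun k ↦ ((1 + a) * ↑u⁻¹) ^ k) atTop (𝓝 0) := by
  nontriviality A
  refine tendsto_pow_atTop_nhds_zero_of_spectralRadius_lt_one ?_
  refine spectrum.spectralRadius_lt_of_forall_lt_of_nonempty (r := 1) (spectrum.nonempty _)
    fun s hs ↦ ?_
  exact_mod_cast ha.norm_lt_one_of_mem_spectrum_cayley hu hs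

theorem exists_isHurwitz_neg_add_smul_one {A : Type*} [NormedRing A] [NormedAlgebra ℂ A]
    [CompleteSpace A] (a : A) : ∃ r : ℝ, 0 ≤ r ∧ IsHurwitz (-(a + (r : ℂ) • 1)) := by
  refine ⟨‖a‖ * ‖(1 : A)‖ + 1, by positivity, fun s hs ↦ ?_⟩
  set r : ℝ := ‖a‖ * ‖(1 : A)‖ + 1
  have hmem : -s - r ∈ spectrum ℂ a := by
    have hneg : algebraMap ℂ A s - -(a + (r : ℂ) • 1) = -(algebraMap ℂ A (-s - r) - a) := by
      simp only [Algebra.algebraMap_eq_smul_one]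
      module
    rwa [spectrum.mem_iff, hneg, IsUnit.neg_iff, ← spectrum.mem_iff] at hs
  have hnorm := spectrum.subset_closedBall_norm_mul a hmem
  rw [mem_closedBall_zero_iff] at hnorm
  have hre := (abs_le.1 ((Complex.abs_re_le_norm _).trans hnorm)).1
  simp only [Complex.sub_re, Complex.neg_re, Complex.ofReal_re] at hre
  linarith

end Hurwitz

section Lyapunov

/-- The Lyapunov operator `x ↦ a⋆ x + x a` of an element `a`. -/
def lyapunov {A : Type*} [Ring A] [StarRing A] [Algebra ℂ A] (a : A) : A →ₗ[ℂ] A :=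
  LinearMap.mulLeft ℂ (star a) + LinearMap.mulRight ℂ a

theorem lyapunov_apply {A : Type*} [Ring A] [StarRing A] [Algebra ℂ A] (a x : A) :
    lyapunov a x = star a * x + x * a := rfl

variable {A : Type*} [CStarAlgebra A] [PartialOrder A] [StarOrderedRing A] {a x w : A}

theorem nonneg_of_star_mul_mul_le_of_tendsto_pow (ha : Tendsto (fun k ↦ a ^ k) atTop (𝓝 0))
    (hx : star a * x * a ≤ x) : 0 ≤ x := by
  have hle (k : ℕ) : star (a ^ k) * x * a ^ k ≤ x := by
    induction k with
    | zero => simp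
    | succ k ih =>
      calc star (a ^ (k + 1)) * x * a ^ (k + 1)
          = star (a ^ k) * (star a * x * a) * a ^ k := by
            rw [pow_succ', star_mul]
            noncomm_ring
        _ ≤ star (a ^ k) * x * a ^ k := star_left_conjugate_le_conjugate hx _
        _ ≤ x := ih
  have hlim : Tendsto (fun k ↦ star (a ^ k) * x * a ^ k) atTop (𝓝 0) := by
    simpa using (ha.star.mul_const x).mul ha
  exact le_of_tendsto' hlim hle

theorem IsHurwitz.nonneg_of_lyapunov_nonpos (ha : IsHurwitz a) (hx : lyapunov a x ≤ 0) :
    0 ≤ x := by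
  have hunit : IsUnit (1 - a) := by
    simpa using spectrum.notMem_iff.1 fun h1 : (1 : ℂ) ∈ spectrum ℂ a ↦
      (ha 1 h1).not_ge (by simp)
  obtain ⟨u, hu⟩ := hunit
  refine nonneg_of_star_mul_mul_le_of_tendsto_pow (ha.tendsto_cayley_pow hu) ?_
  -- The Cayley transform `(1 + a)(1 - a)⁻¹` turns the Lyapunov inequality into a Stein inequality.
  have hcayley : star (1 + a) * x * (1 + a) ≤ star (u : A) * x * u := by
    rw [← sub_nonneg]
    have : star (u : A) * x * u - star (1 + a) * x * (1 + a) = (2 : ℝ) • -lyapunov a x := by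
      rw [hu, lyapunov_apply, star_add, star_sub, star_one, two_smul]
      noncomm_ring
    rw [this]
    exact smul_nonneg zero_le_two (neg_nonneg.2 hx)
  calc star ((1 + a) * ↑u⁻¹) * x * ((1 + a) * ↑u⁻¹)
      = star (↑u⁻¹ : A) * (star (1 + a) * x * (1 + a)) * ↑u⁻¹ := by
        rw [star_mul]
        noncomm_ring
    _ ≤ star (↑u⁻¹ : A) * (star (u : A) * x * u) * ↑u⁻¹ :=
        star_left_conjugate_le_conjugate hcayley _
    _ = star ((u : A) * ↑u⁻¹) * x * (u * ↑u⁻¹) := by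
        rw [star_mul]
        noncomm_ring
    _ = x := by simp

theorem IsHurwitz.lyapunov_injective (ha : IsHurwitz a) : Function.Injective (lyapunov a) := by
  refine (injective_iff_map_eq_zero _).2 fun x hx ↦ le_antisymm ?_ ?_
  · exact neg_nonneg.1 (ha.nonneg_of_lyapunov_nonpos (by rw [map_neg, hx, neg_zero]))
  · exact ha.nonneg_of_lyapunov_nonpos hx.le

theorem IsHurwitz.lyapunov_surjective [FiniteDimensional ℂ A] (ha : IsHurwitz a) :
    Function.Surjective (lyapunov a) :=
  LinearMap.injective_iff_surjective.1 ha.lyapunov_injective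

theorem IsHurwitz.exists_lyapunov_eq_neg [FiniteDimensional ℂ A] (ha : IsHurwitz a) (hw : 0 ≤ w) :
    ∃ x, 0 ≤ x ∧ lyapunov a x = -w := by
  obtain ⟨x, hx⟩ := ha.lyapunov_surjective (-w)
  exact ⟨x, ha.nonneg_of_lyapunov_nonpos (hx.trans_le (neg_nonpos.2 hw)), hx⟩

end Lyapunov

section SpectralCriterion

theorem exists_comp_eq_of_ker_le_ker {K V W U : Type*} [Field K] [AddCommGroup V] [Module K V]
    [AddCommGroup W] [Module K W] [AddCommGroup U] [Module K U] {f : V →ₗ[K] W} {g : V →ₗ[K] U}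
    (h : f.ker ≤ g.ker) : ∃ φ : W →ₗ[K] U, φ ∘ₗ f = g := by
  obtain ⟨φ, hφ⟩ :=
    LinearMap.exists_extend (f.ker.liftQ g h ∘ₗ f.quotKerEquivRange.symm.toLinearMap)
  refine ⟨φ, LinearMap.ext fun v ↦ ?_⟩
  calc φ (f v)
      = f.ker.liftQ g h (f.quotKerEquivRange.symm ⟨f v, f.mem_range_self v⟩) :=
        LinearMap.congr_fun hφ ⟨f v, f.mem_range_self v⟩
    _ = g v := by
        rw [LinearMap.quotKerEquivRange_symm_apply_image, Submodule.mkQ_apply,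
          Submodule.liftQ_apply]

theorem exists_mul_eq_of_forall_mulVec_eq_zero {K n p q : Type*} [Field K] [Fintype n] [Fintype q]
    {M : Matrix p n K} {X : Matrix q n K} (h : ∀ v, X *ᵥ v = 0 → M *ᵥ v = 0) :
    ∃ F : Matrix p q K, F * X = M := by
  classical
  obtain ⟨φ, hφ⟩ := exists_comp_eq_of_ker_le_ker (f := X.mulVecLin) (g := M.mulVecLin) h
  refine ⟨LinearMap.toMatrix' φ, toLin'.injective ?_⟩
  rwa [toLin'_mul, toLin'_toMatrix']

theorem vecMul_injective_of_rank_eq_card {K p q : Type*} [Field K] [Fintype p] [Fintype q]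
    {M : Matrix p q K} (hM : M.rank = Fintype.card p) : Function.Injective M.vecMul := by
  rw [vecMul_injective_iff, linearIndependent_iff_card_eq_finrank_span, Set.finrank,
    ← rank_eq_finrank_span_row, hM]

variable {n : Type*} [Fintype n] [DecidableEq n]

theorem mem_spectrum_iff_exists_mulVec_eq_smul {K : Type*} [Field K] {A : Matrix n n K} {s : K} :
    s ∈ spectrum K A ↔ ∃ v ≠ 0, A *ᵥ v = s • v := by
  rw [spectrum.mem_iff, isUnit_iff_isUnit_det, isUnit_iff_ne_zero, not_ne_iff,
    ← exists_mulVec_eq_zero_iff]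
  refine exists_congr fun v ↦ and_congr_right fun _ ↦ ?_
  rw [sub_mulVec, sub_eq_zero, Algebra.algebraMap_eq_smul_one, smul_mulVec, one_mulVec, eq_comm]

theorem dotProduct_lyapunov_mulVec {A : Matrix n n ℂ} {s : ℂ} {v : n → ℂ} (H : Matrix n n ℂ)
    (hv : A *ᵥ v = s • v) :
    star v ⬝ᵥ lyapunov A H *ᵥ v = (2 * s.re : ℝ) * (star v ⬝ᵥ H *ᵥ v) := by
  have hleft : star v ⬝ᵥ (Aᴴ * H) *ᵥ v = star s * (star v ⬝ᵥ H *ᵥ v) := by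
    rw [← mulVec_mulVec, dotProduct_mulVec, ← star_mulVec, hv, star_smul, smul_dotProduct,
      smul_eq_mul]
  have hright : star v ⬝ᵥ (H * A) *ᵥ v = s * (star v ⬝ᵥ H *ᵥ v) := by
    rw [← mulVec_mulVec, hv, mulVec_smul, dotProduct_smul, smul_eq_mul]
  rw [lyapunov_apply, star_eq_conjTranspose, add_mulVec, dotProduct_add, hleft, hright, ← add_mul,
    ← Complex.add_conj, add_comm s]
  rfl

theorem mulVec_eq_zero_of_lyapunov_le_neg {A H V : Matrix n n ℂ} (hH : 0 ≤ H) (hV : 0 ≤ V)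
    (hle : lyapunov A H ≤ -V) {s : ℂ} (hs : 0 ≤ s.re) {v : n → ℂ} (hv : A *ᵥ v = s • v) :
    V *ᵥ v = 0 := by
  rw [nonneg_iff_posSemidef] at hH hV
  rw [← hV.dotProduct_mulVec_zero_iff]
  refine le_antisymm ?_ (hV.dotProduct_mulVec_nonneg v)
  have hquad := (Matrix.le_iff.1 hle).dotProduct_mulVec_nonneg v
  rw [sub_mulVec, neg_mulVec, dotProduct_sub, dotProduct_neg, dotProduct_lyapunov_mulVec H hv,
    sub_nonneg, le_neg] at hquad
  refine hquad.trans (neg_nonpos.2 (mul_nonneg ?_ (hH.dotProduct_mulVec_nonneg v)))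
  exact_mod_cast mul_nonneg zero_le_two hs

theorem isHurwitz_of_lyapunov_le_neg {A H V : Matrix n n ℂ} (hH : 0 ≤ H) (hV : 0 ≤ V)
    (hle : lyapunov A H ≤ -V)
    (hdetect : ∀ s : ℂ, 0 ≤ s.re → ∀ v, A *ᵥ v = s • v → V *ᵥ v = 0 → v = 0) : IsHurwitz A := by
  intro s hs
  obtain ⟨v, hv0, hv⟩ := mem_spectrum_iff_exists_mulVec_eq_smul.1 hs
  by_contra! hre
  exact hv0 (hdetect s hre v hv (mulVec_eq_zero_of_lyapunov_le_neg hH hV hle hre hv))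

end SpectralCriterion

section Stabilization

variable {n m : Type*} [Fintype n] [Fintype m] {A : Matrix n n ℂ} {B : Matrix n m ℂ}

theorem exists_shifted_gramian (A : Matrix n n ℂ) (B : Matrix n m ℂ) :
    ∃ r : ℝ, 0 ≤ r ∧ ∃ X : Matrix n n ℂ, 0 ≤ X ∧
      A * X + X * Aᴴ + (2 * r : ℂ) • X = B * Bᴴ := by
  classical
  obtain ⟨r, hr, hurwitz⟩ := exists_isHurwitz_neg_add_smul_one A
  obtain ⟨X, hX, hlyap⟩ :=
    hurwitz.star.exists_lyapunov_eq_neg (posSemidef_self_mul_conjTranspose B).nonneg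
  refine ⟨r, hr, X, hX, neg_injective ?_⟩
  rw [← hlyap, lyapunov_apply, star_star, star_eq_conjTranspose]
  simp only [conjTranspose_neg, conjTranspose_add, conjTranspose_smul, conjTranspose_one,
    Complex.star_def, Complex.conj_ofReal, neg_mul, mul_neg, add_mul, mul_add, smul_mul_assoc,
    mul_smul_comm, one_mul, mul_one]
  module

theorem conjTranspose_mulVec_eq_zero_of_shifted_gramian {r : ℂ} {X : Matrix n n ℂ}
    (hX : X.IsHermitian) (hgram : A * X + X * Aᴴ + r • X = B * Bᴴ) {v : n → ℂ}
    (hv : X *ᵥ v = 0) : Bᴴ *ᵥ v = 0 := by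
  have hv' : star v ᵥ* X = 0 := by
    rw [← hX.eq, ← star_mulVec, hv, star_zero]
  rw [← self_mul_conjTranspose_mulVec_eq_zero,
    ← (posSemidef_self_mul_conjTranspose B).dotProduct_mulVec_zero_iff, ← hgram]
  simp only [add_mulVec, smul_mulVec, ← mulVec_mulVec, hv, mulVec_zero, smul_zero, zero_add,
    add_zero]
  rw [dotProduct_mulVec, hv', zero_dotProduct]

variable [DecidableEq n]

/-- Stabilizability of the pair `(A, B)`, in the form of the Hautus rank test on the closed right
half-plane. -/
def IsStabilizable (A : Matrix n n ℂ) (B : Matrix n m ℂ) : Prop :=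
  ∀ s : ℂ, 0 ≤ s.re → (fromCols (s • 1 - A) B).rank = Fintype.card n

theorem IsStabilizable.eq_zero_of_mulVec_eq_smul (h : IsStabilizable A B) {s : ℂ}
    (hs : 0 ≤ s.re) {v : n → ℂ} (hA : Aᴴ *ᵥ v = s • v) (hB : Bᴴ *ᵥ v = 0) : v = 0 := by
  have hA' : star v ᵥ* A = star s • star v := by
    rw [← star_smul, ← hA, star_mulVec, conjTranspose_conjTranspose]
  have hB' : star v ᵥ* B = 0 := by
    rw [← star_zero, ← hB, star_mulVec, conjTranspose_conjTranspose]
  have hinj := vecMul_injective_of_rank_eq_card (h (star s) (by simpa using hs))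
  refine star_eq_zero.1 (hinj ?_)
  dsimp only
  rw [vecMul_fromCols, zero_vecMul, vecMul_sub, vecMul_smul, vecMul_one, hA', sub_self, hB']
  exact Sum.elim_zero_zero

theorem IsStabilizable.exists_isHurwitz_add_mul (h : IsStabilizable A B) :
    ∃ F : Matrix m n ℂ, IsHurwitz (A + B * F) := by
  obtain ⟨r, hr, X, hX, hgram⟩ := exists_shifted_gramian A B
  have hherm : X.IsHermitian := (nonneg_iff_posSemidef.1 hX).isHermitian
  obtain ⟨F, hF⟩ := exists_mul_eq_of_forall_mulVec_eq_zero (M := -Bᴴ) (X := X) fun v hv ↦ by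
    rw [neg_mulVec, conjTranspose_mulVec_eq_zero_of_shifted_gramian hherm hgram hv, neg_zero]
  have hF' : X * Fᴴ = -B := by
    rw [← hherm.eq, ← conjTranspose_mul, hF, conjTranspose_neg, conjTranspose_conjTranspose]
  have hlyap : lyapunov (A + B * F)ᴴ X = -(B * Bᴴ) - (2 * r : ℂ) • X := by
    rw [lyapunov_apply, star_eq_conjTranspose, conjTranspose_conjTranspose, conjTranspose_add,
      conjTranspose_mul, add_mul, mul_add, Matrix.mul_assoc, hF, ← Matrix.mul_assoc, hF', ← hgram,
      Matrix.mul_neg, Matrix.neg_mul, ← hgram]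
    module
  refine ⟨F, ?_⟩
  have hdual : IsHurwitz (A + B * F)ᴴ := by
    refine isHurwitz_of_lyapunov_le_neg hX (posSemidef_self_mul_conjTranspose B).nonneg ?_ ?_
    · rw [hlyap]
      exact sub_le_self _ (smul_nonneg (by exact_mod_cast mul_nonneg zero_le_two hr) hX)
    · intro s hs v hv hBv
      rw [self_mul_conjTranspose_mulVec_eq_zero] at hBv
      refine h.eq_zero_of_mulVec_eq_smul hs ?_ hBv
      rw [← hv, conjTranspose_add, conjTranspose_mul, add_mulVec, ← mulVec_mulVec, hBv,
        mulVec_zero, add_zero]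
  simpa [star_eq_conjTranspose] using hdual.star

end Stabilization

section LinearMatrixInequality

variable {n m : Type*} [Fintype n] [Fintype m] (A Q : Matrix n n ℂ) (B C : Matrix n m ℂ)
  (R : Matrix m m ℂ)

/-- The block matrix `M(Y)` of the linear matrix inequality. -/
def lmiMatrix (Y : Matrix n n ℂ) : Matrix (n ⊕ m) (n ⊕ m) ℂ :=
  fromBlocks (Aᴴ * Y + Y * A + Q) (Y * B + C) (Bᴴ * Y + Cᴴ) R

/-- The solution set `S_LMI` of the linear matrix inequality. -/
def lmiSolutions : Set (Matrix n n ℂ) :=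
  {Y | Y.IsHermitian ∧ (lmiMatrix A Q B C R Y).PosSemidef}

variable [DecidableEq n]

/-- The compression of `M(Y)` to the graph `u = F x` of a state feedback `F`; its vanishing is the
Lyapunov equation for the cost matrix of `F`. -/
def feedbackResidual (F : Matrix m n ℂ) (Y : Matrix n n ℂ) : Matrix n n ℂ :=
  (fromRows (1 : Matrix n n ℂ) F)ᴴ * lmiMatrix A Q B C R Y * fromRows (1 : Matrix n n ℂ) F

variable {A Q B C R} {F : Matrix m n ℂ} {P Y : Matrix n n ℂ}

theorem feedbackResidual_nonneg (hY : Y ∈ lmiSolutions A Q B C R) (F : Matrix m n ℂ) :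
    0 ≤ feedbackResidual A Q B C R F Y :=
  (hY.2.conjTranspose_mul_mul_same _).nonneg

theorem feedbackResidual_eq_blocks (F : Matrix m n ℂ) (Y : Matrix n n ℂ) :
    feedbackResidual A Q B C R F Y =
      Aᴴ * Y + Y * A + Q + (Y * B + C) * F + Fᴴ * (Bᴴ * Y + Cᴴ) + Fᴴ * R * F := by
  rw [feedbackResidual, lmiMatrix, conjTranspose_fromRows_eq_fromCols_conjTranspose,
    fromCols_mul_fromBlocks, fromCols_mul_fromRows]
  simp only [conjTranspose_one, Matrix.one_mul, Matrix.mul_one, Matrix.add_mul]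
  abel

theorem feedbackResidual_eq_lyapunov_add (F : Matrix m n ℂ) (Y : Matrix n n ℂ) :
    feedbackResidual A Q B C R F Y =
      lyapunov (A + B * F) Y + (Q + C * F + Fᴴ * Cᴴ + Fᴴ * R * F) := by
  rw [feedbackResidual_eq_blocks, lyapunov_apply, star_eq_conjTranspose, conjTranspose_add,
    conjTranspose_mul]
  simp only [Matrix.add_mul, Matrix.mul_add, Matrix.mul_assoc]
  abel

theorem lyapunov_sub_eq_feedbackResidual_sub (F : Matrix m n ℂ) (P Y : Matrix n n ℂ) :
    lyapunov (A + B * F) (P - Y) =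
      feedbackResidual A Q B C R F P - feedbackResidual A Q B C R F Y := by
  rw [map_sub, feedbackResidual_eq_lyapunov_add, feedbackResidual_eq_lyapunov_add]
  abel

theorem exists_feedbackResidual_eq_zero (hF : IsHurwitz (A + B * F)) :
    ∃ P, feedbackResidual A Q B C R F P = 0 := by
  obtain ⟨P, hP⟩ := hF.lyapunov_surjective (-(Q + C * F + Fᴴ * Cᴴ + Fᴴ * R * F))
  exact ⟨P, by rw [feedbackResidual_eq_lyapunov_add, hP, neg_add_cancel]⟩

theorem le_of_feedbackResidual_le (hF : IsHurwitz (A + B * F))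
    (h : feedbackResidual A Q B C R F P ≤ feedbackResidual A Q B C R F Y) : Y ≤ P := by
  rw [← sub_nonneg]
  refine hF.nonneg_of_lyapunov_nonpos ?_
  rwa [lyapunov_sub_eq_feedbackResidual_sub (Q := Q) (C := C) (R := R), sub_nonpos]

end LinearMatrixInequality

section RiccatiGain

variable {n m : Type*} [Fintype n] [Fintype m] [DecidableEq m] {A Q : Matrix n n ℂ}
  {B C : Matrix n m ℂ} {R : Matrix m m ℂ} {P Y : Matrix n n ℂ}

/-- The feedback minimizing `feedbackResidual A Q B C R · P` when `R` is positive definite. -/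
noncomputable def riccatiGain (B C : Matrix n m ℂ) (R : Matrix m m ℂ) (P : Matrix n n ℂ) :
    Matrix m n ℂ :=
  -(R⁻¹ * (Bᴴ * P + Cᴴ))

theorem mul_riccatiGain (hR : IsUnit R) (P : Matrix n n ℂ) :
    R * riccatiGain B C R P = -(Bᴴ * P + Cᴴ) := by
  rw [riccatiGain, Matrix.mul_neg, mul_nonsing_inv_cancel_left _ _
    ((isUnit_iff_isUnit_det R).1 hR)]

theorem conjTranspose_riccatiGain_mul (hR : R.IsHermitian) (hunit : IsUnit R)
    (hP : P.IsHermitian) :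
    (riccatiGain B C R P)ᴴ * R = -(P * B + C) := by
  have h := congrArg conjTranspose (mul_riccatiGain (B := B) (C := C) hunit P)
  rwa [conjTranspose_mul, hR.eq, conjTranspose_neg, conjTranspose_add,
    conjTranspose_mul, hP.eq, conjTranspose_conjTranspose, conjTranspose_conjTranspose] at h

variable [DecidableEq n]

theorem feedbackResidual_eq_add_square (hR : R.IsHermitian) (hunit : IsUnit R)
    (hP : P.IsHermitian) (F : Matrix m n ℂ) :
    feedbackResidual A Q B C R F P = feedbackResidual A Q B C R (riccatiGain B C R P) P +
      (F - riccatiGain B C R P)ᴴ * R * (F - riccatiGain B C R P) := by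
  have hleft := mul_riccatiGain (B := B) (C := C) hunit P
  have hright := conjTranspose_riccatiGain_mul (B := B) (C := C) hR hunit hP
  generalize riccatiGain B C R P = G at hleft hright ⊢
  rw [feedbackResidual_eq_blocks, feedbackResidual_eq_blocks, ← neg_eq_iff_eq_neg.2 hleft,
    ← neg_eq_iff_eq_neg.2 hright]
  simp only [conjTranspose_sub, Matrix.sub_mul, Matrix.mul_sub, Matrix.neg_mul, Matrix.mul_neg,
    Matrix.mul_assoc]
  abel

theorem mem_lmiSolutions_of_feedbackResidual_nonneg (hR : R.PosDef) (hP : P.IsHermitian)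
    (h : 0 ≤ feedbackResidual A Q B C R (riccatiGain B C R P) P) :
    P ∈ lmiSolutions A Q B C R := by
  have : Invertible R := hR.isUnit.invertible
  have hcorner : Bᴴ * P + Cᴴ = (P * B + C)ᴴ := by
    rw [conjTranspose_add, conjTranspose_mul, hP.eq]
  have hschur : feedbackResidual A Q B C R (riccatiGain B C R P) P =
      Aᴴ * P + P * A + Q - (P * B + C) * R⁻¹ * (P * B + C)ᴴ := by
    rw [feedbackResidual_eq_blocks, Matrix.mul_assoc _ R, mul_riccatiGain hR.isUnit, Matrix.mul_neg,
      add_neg_cancel_right, riccatiGain, Matrix.mul_neg, ← sub_eq_add_neg, ← Matrix.mul_assoc,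
      hcorner]
  refine ⟨hP, ?_⟩
  rw [lmiMatrix, hcorner, hR.fromBlocks₂₂, ← hschur]
  exact nonneg_iff_posSemidef.1 h

theorem continuous_feedbackResidual_riccatiGain : Continuous fun p : Matrix n n ℂ × Matrix n n ℂ ↦
    feedbackResidual A Q B C R (riccatiGain B C R p.1) p.2 := by
  simp only [feedbackResidual_eq_blocks, riccatiGain]
  fun_prop

end RiccatiGain

section Newton

theorem mulVec_eq_zero_of_conjTranspose_mul_mul_mulVec_eq_zero {n m : Type*} [Fintype n]
    [Fintype m] {R : Matrix m m ℂ} (hR : R.PosDef) {D : Matrix m n ℂ} {v : n → ℂ}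
    (hv : (Dᴴ * R * D) *ᵥ v = 0) : D *ᵥ v = 0 := by
  by_contra hD
  refine (hR.dotProduct_mulVec_pos hD).ne' ?_
  rw [star_mulVec, ← dotProduct_mulVec, mulVec_mulVec, mulVec_mulVec, hv, dotProduct_zero]

variable {n m : Type*} [Fintype n] [Fintype m] [DecidableEq n] {A Q : Matrix n n ℂ}
  {B C : Matrix n m ℂ} {R : Matrix m m ℂ} {P Y : Matrix n n ℂ}

/-- The cost matrices of the stabilizing state feedbacks. -/
def stabilizingCosts (A Q : Matrix n n ℂ) (B C : Matrix n m ℂ) (R : Matrix m m ℂ) :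
    Set (Matrix n n ℂ) :=
  {P | ∃ F, IsHurwitz (A + B * F) ∧ feedbackResidual A Q B C R F P = 0}

theorem le_of_mem_stabilizingCosts (hP : P ∈ stabilizingCosts A Q B C R)
    (hY : Y ∈ lmiSolutions A Q B C R) : Y ≤ P := by
  obtain ⟨F, hF, hFP⟩ := hP
  exact le_of_feedbackResidual_le hF (hFP.trans_le (feedbackResidual_nonneg hY F))

variable [DecidableEq m]

theorem isHurwitz_add_mul_riccatiGain (hR : R.PosDef) (hP : P ∈ stabilizingCosts A Q B C R)
    (hY : Y ∈ lmiSolutions A Q B C R) : IsHurwitz (A + B * riccatiGain B C R P) := by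
  have hYP := le_of_mem_stabilizingCosts hP hY
  have hherm : P.IsHermitian := IsSelfAdjoint.of_ge hYP hY.1
  obtain ⟨F, hF, hFP⟩ := hP
  set G := riccatiGain B C R P
  have hsquare := feedbackResidual_eq_add_square (A := A) (Q := Q) (B := B) (C := C)
    hR.isHermitian hR.isUnit hherm F
  rw [hFP, eq_comm, add_eq_zero_iff_eq_neg] at hsquare
  refine isHurwitz_of_lyapunov_le_neg (sub_nonneg.2 hYP)
    (hR.posSemidef.conjTranspose_mul_mul_same (F - G)).nonneg ?_ ?_
  · rw [lyapunov_sub_eq_feedbackResidual_sub (Q := Q) (C := C) (R := R), hsquare]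
    exact sub_le_self _ (feedbackResidual_nonneg hY G)
  · intro s hs v hv hFG
    have hFGv := mulVec_eq_zero_of_conjTranspose_mul_mul_mulVec_eq_zero hR hFG
    rw [sub_mulVec, sub_eq_zero] at hFGv
    by_contra hv0
    refine (hF s (mem_spectrum_iff_exists_mulVec_eq_smul.2 ⟨v, hv0, ?_⟩)).not_ge hs
    rw [← hv, add_mulVec, add_mulVec, ← mulVec_mulVec, ← mulVec_mulVec, hFGv]

theorem exists_newton_step (hR : R.PosDef) (hP : P ∈ stabilizingCosts A Q B C R)
    (hY : Y ∈ lmiSolutions A Q B C R) : ∃ P' ∈ stabilizingCosts A Q B C R,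
      feedbackResidual A Q B C R (riccatiGain B C R P) P' = 0 ∧ P' ≤ P := by
  have hG := isHurwitz_add_mul_riccatiGain hR hP hY
  obtain ⟨P', hP'⟩ := exists_feedbackResidual_eq_zero (Q := Q) (C := C) (R := R) hG
  refine ⟨P', ⟨_, hG, hP'⟩, hP', le_of_feedbackResidual_le (Q := Q) (C := C) (R := R) hG ?_⟩
  have hherm : P.IsHermitian := IsSelfAdjoint.of_ge (le_of_mem_stabilizingCosts hP hY) hY.1
  obtain ⟨F, -, hFP⟩ := hP
  rw [hP', ← hFP, feedbackResidual_eq_add_square hR.isHermitian hR.isUnit hherm F]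
  exact le_add_of_nonneg_right (hR.posSemidef.conjTranspose_mul_mul_same _).nonneg

theorem exists_antitone_newton_sequence (hstab : IsStabilizable A B) (hR : R.PosDef)
    (hY : Y ∈ lmiSolutions A Q B C R) : ∃ P : ℕ → Matrix n n ℂ, Antitone P ∧
      (∀ k, P k ∈ stabilizingCosts A Q B C R) ∧
      ∀ k, feedbackResidual A Q B C R (riccatiGain B C R (P k)) (P (k + 1)) = 0 := by
  obtain ⟨F, hF⟩ := hstab.exists_isHurwitz_add_mul
  obtain ⟨P₀, hP₀⟩ := exists_feedbackResidual_eq_zero (Q := Q) (C := C) (R := R) hF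
  choose! next hmem hres hle using
    fun P (hP : P ∈ stabilizingCosts A Q B C R) ↦ exists_newton_step hR hP hY
  have hiter (k : ℕ) : next^[k] P₀ ∈ stabilizingCosts A Q B C R := by
    induction k with
    | zero => exact ⟨F, hF, hP₀⟩
    | succ k ih => exact Function.iterate_succ_apply' next k P₀ ▸ hmem _ ih
  refine ⟨fun k ↦ next^[k] P₀, antitone_nat_of_succ_le fun k ↦ ?_, hiter, fun k ↦ ?_⟩
  · rw [Function.iterate_succ_apply']
    exact hle _ (hiter k)
  · dsimp only
    rw [Function.iterate_succ_apply']
    exact hres _ (hiter k)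

end Newton

section Perturbation

variable {n m : Type*} [Fintype n] {A Q : Matrix n n ℂ} {B C : Matrix n m ℂ} {R : Matrix m m ℂ}

theorem exists_isGreatest_lmiSolutions_of_posDef [DecidableEq n] [Fintype m]
    (hstab : IsStabilizable A B) (hR : R.PosDef) (hne : (lmiSolutions A Q B C R).Nonempty) :
    ∃ X, IsGreatest (lmiSolutions A Q B C R) X := by
  classical
  obtain ⟨Y₀, hY₀⟩ := hne
  obtain ⟨P, hanti, hcost, hnewton⟩ := exists_antitone_newton_sequence hstab hR hY₀
  have hlower {Y : Matrix n n ℂ} (hY : Y ∈ lmiSolutions A Q B C R) (k : ℕ) : Y ≤ P k :=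
    le_of_mem_stabilizingCosts (hcost k) hY
  have := compactIccSpace_of_finiteDimensional (Matrix n n ℂ)
  obtain ⟨X, hX⟩ := exists_tendsto_of_antitone_of_bddBelow hanti
    ⟨Y₀, Set.forall_mem_range.2 (hlower hY₀)⟩
  have hupper : X ∈ upperBounds (lmiSolutions A Q B C R) :=
    fun Y hY ↦ ge_of_tendsto' hX (hlower hY)
  have hriccati : feedbackResidual A Q B C R (riccatiGain B C R X) X = 0 := by
    have hlim := (continuous_feedbackResidual_riccatiGain (A := A) (Q := Q) (B := B) (C := C)
      (R := R)).tendsto (X, X) |>.comp (hX.prodMk_nhds (hX.comp (tendsto_add_atTop_nat 1)))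
    exact tendsto_nhds_unique (hlim.congr hnewton) tendsto_const_nhds
  exact ⟨X, mem_lmiSolutions_of_feedbackResidual_nonneg hR
    (IsSelfAdjoint.of_ge (hupper hY₀) hY₀.1) hriccati.ge, hupper⟩

theorem lmiSolutions_mono [Finite m] : Monotone (lmiSolutions A Q B C) := by
  classical
  cases nonempty_fintype m
  rintro R R' hle Y ⟨hherm, hY⟩
  have hcorner : (fromBlocks (0 : Matrix n n ℂ) 0 0 (R' - R)).PosSemidef := by
    have := (Matrix.le_iff.1 hle).conjTranspose_mul_mul_same
      (fromCols (0 : Matrix m n ℂ) (1 : Matrix m m ℂ))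
    rw [conjTranspose_fromCols_eq_fromRows_conjTranspose, fromRows_mul,
      fromRows_mul_fromCols] at this
    simpa using this
  refine ⟨hherm, ?_⟩
  have := hY.add hcorner
  rw [lmiMatrix, fromBlocks_add] at this
  simpa [lmiMatrix] using this

theorem continuous_lmiMatrix : Continuous fun p : Matrix m m ℂ × Matrix n n ℂ ↦
    lmiMatrix A Q B C p.1 p.2 := by
  unfold lmiMatrix
  apply Continuous.matrix_fromBlocks <;> fun_prop

theorem exists_isGreatest_lmiSolutions_of_tendsto [Finite m] {S : ℕ → Matrix m m ℂ}
    (hS : Antitone S) (hlim : Tendsto S atTop (𝓝 R))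
    (hgreatest : ∀ k, ∃ X, IsGreatest (lmiSolutions A Q B C (S k)) X)
    (hne : (lmiSolutions A Q B C R).Nonempty) : ∃ X, IsGreatest (lmiSolutions A Q B C R) X := by
  classical
  cases nonempty_fintype m
  choose X hX using hgreatest
  obtain ⟨Y₀, hY₀⟩ := hne
  have hlower {Y : Matrix n n ℂ} (hY : Y ∈ lmiSolutions A Q B C R) (k : ℕ) : Y ≤ X k :=
    (hX k).2 (lmiSolutions_mono (hS.le_of_tendsto hlim k) hY)
  have hanti : Antitone X := fun k l hkl ↦ (hX l).mono (hX k) (lmiSolutions_mono (hS hkl))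
  have := compactIccSpace_of_finiteDimensional (Matrix n n ℂ)
  obtain ⟨Z, hZ⟩ := exists_tendsto_of_antitone_of_bddBelow hanti
    ⟨Y₀, Set.forall_mem_range.2 (hlower hY₀)⟩
  have hupper : Z ∈ upperBounds (lmiSolutions A Q B C R) :=
    fun Y hY ↦ ge_of_tendsto' hZ (hlower hY)
  have hpos : 0 ≤ lmiMatrix A Q B C R Z :=
    ge_of_tendsto' ((continuous_lmiMatrix.tendsto (R, Z)).comp (hlim.prodMk_nhds hZ))
      fun k ↦ (hX k).1.2.nonneg
  exact ⟨Z, ⟨IsSelfAdjoint.of_ge (hupper hY₀) hY₀.1, nonneg_iff_posSemidef.1 hpos⟩, hupper⟩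

theorem exists_isGreatest_lmiSolutions [DecidableEq n] [Fintype m] (hstab : IsStabilizable A B)
    (hne : (lmiSolutions A Q B C R).Nonempty) : ∃ X, IsGreatest (lmiSolutions A Q B C R) X := by
  classical
  have hR : R.PosSemidef := hne.some_mem.2.submatrix Sum.inr
  have hanti : Antitone fun k : ℕ ↦ R + (1 / (k + 1 : ℝ)) • (1 : Matrix m m ℂ) := fun k l hkl ↦
    add_le_add_right (smul_le_smul_of_nonneg_right (Nat.one_div_le_one_div hkl) zero_le_one) R
  have hlim : Tendsto (fun k : ℕ ↦ R + (1 / (k + 1 : ℝ)) • (1 : Matrix m m ℂ)) atTop (𝓝 R) := by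
    have hzero := tendsto_one_div_add_atTop_nhds_zero_nat (𝕜 := ℝ)
    simpa using (hzero.smul_const (1 : Matrix m m ℂ)).const_add R
  refine exists_isGreatest_lmiSolutions_of_tendsto hanti hlim (fun k ↦ ?_) hne
  refine exists_isGreatest_lmiSolutions_of_posDef hstab ?_
    (hne.mono (lmiSolutions_mono (hanti.le_of_tendsto hlim k)))
  exact PosDef.posSemidef_add hR (PosDef.one.smul Nat.one_div_pos_of_nat)

end Perturbation

section Factorization

theorem exists_lure_factors {n m p : Type*} [Fintype p] (e : p ≃ n ⊕ m)
    {T : Matrix n n ℂ} {S : Matrix n m ℂ} {S' : Matrix m n ℂ} {R : Matrix m m ℂ}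
    (h : (fromBlocks T S S' R).PosSemidef) : ∃ (K : Matrix p n ℂ) (L : Matrix p m ℂ),
      T = Kᴴ * K ∧ S = Kᴴ * L ∧ R = Lᴴ * L := by
  classical
  have := Fintype.ofEquiv p e
  obtain ⟨N, hN⟩ := CStarAlgebra.nonneg_iff_eq_star_mul_self.1 h.nonneg
  have hreindex : fromBlocks T S S' R = (N.submatrix e id)ᴴ * N.submatrix e id := by
    rw [hN, conjTranspose_submatrix, submatrix_mul_equiv, submatrix_id_id, star_eq_conjTranspose]
  rw [← fromCols_toCols (N.submatrix e id), conjTranspose_fromCols_eq_fromRows_conjTranspose,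
    fromRows_mul_fromCols, fromBlocks_inj] at hreindex
  exact ⟨_, _, hreindex.1, hreindex.2.1, hreindex.2.2.2⟩

end Factorization

/-- If `(A, B)` is stabilizable and the LMI is feasible, then there is a maximal
solution `X₊` of the Lur'e equations: `X₊ − Y` is positive semidefinite for every
Hermitian `Y` satisfying the LMI. -/
theorem exists_maximal_lure_solution
    (n m : ℕ) (hn : 0 < n) (hm : 0 < m)
    (A Q : Matrix (Fin n) (Fin n) ℂ) (B C : Matrix (Fin n) (Fin m) ℂ)
    (R : Matrix (Fin m) (Fin m) ℂ) (hQ : Qᴴ = Q) (hR : Rᴴ = R)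
    (hstab : ∀ s : ℂ, 0 ≤ s.re →
      (fromCols (s • (1 : Matrix (Fin n) (Fin n) ℂ) - A) B).rank = n)
    (hfeas : ∃ Y : Matrix (Fin n) (Fin n) ℂ, Yᴴ = Y ∧
      (fromBlocks (Aᴴ * Y + Y * A + Q) (Y * B + C) (Bᴴ * Y + Cᴴ) R).PosSemidef) :
    ∃ (p : ℕ) (X : Matrix (Fin n) (Fin n) ℂ) (K : Matrix (Fin p) (Fin n) ℂ)
      (L : Matrix (Fin p) (Fin m) ℂ), Xᴴ = X ∧
        Aᴴ * X + X * A + Q = Kᴴ * K ∧ X * B + C = Kᴴ * L ∧ R = Lᴴ * L ∧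
        ∀ Y : Matrix (Fin n) (Fin n) ℂ, Yᴴ = Y →
          (fromBlocks (Aᴴ * Y + Y * A + Q) (Y * B + C) (Bᴴ * Y + Cᴴ) R).PosSemidef →
          (X - Y).PosSemidef := by
  obtain ⟨Y₀, hY₀⟩ := hfeas
  have hstabilizable : IsStabilizable A B := fun s hs ↦
    (hstab s hs).trans (Fintype.card_fin n).symm
  obtain ⟨X, hX, hmax⟩ :=
    exists_isGreatest_lmiSolutions (Q := Q) (C := C) (R := R) hstabilizable ⟨Y₀, hY₀⟩
  obtain ⟨K, L, hK, hKL, hL⟩ := exists_lure_factors finSumFinEquiv.symm hX.2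
  exact ⟨n + m, X, K, L, hX.1, hK, hKL, hL, fun Y hY hM ↦ hmax ⟨hY, hM⟩⟩
end

section
/- Let A, Q ∈ ℂ^{n×n} with Q = Q*, B, C ∈ ℂ^{n×m}, R = R* ∈ ℂ^{m×m}, and let γ ∈ ℝ be such that γ is not an eigenvalue of A. Then the matrix Ã = [[0, A − γI], [A* − γI, Q]] ∈ ℂ^{2n×2n} is invertible, and the Schur complement of Ã in the bordered matrix [[Ã, [B; C]], [[B* C*], R]] equals the spectral density function evaluated at γ: R − [B* C*] Ã^{−1} [B; C] = Φ(γ), where Φ(s) = [[(sI − A)^{−1}B], [I_m]]* [[Q, C], [C*, R]] [[(sI − A)^{−1}B], [I_m]]. -/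
open Matrix

/-! Up to exchanging its block rows, `[[0, M], [N, Q]]` is block triangular, so it is invertible as
soon as `M` and `N` are, with inverse `[[-N⁻¹QM⁻¹, N⁻¹], [M⁻¹, 0]]`. Its Schur complement then
expands into the four terms of `[-UN⁻¹, I] [[Q, C], [V, R]] [-M⁻¹B; I]`. For `M = A - sI`,
`N = Mᴴ`, `U = Bᴴ` and `V = Cᴴ` this is `Φ(s)`. -/

section

variable {n p q α : Type*}

theorem fromBlocks_zero₁₁_eq_submatrix [Zero α] (M N Q : Matrix n n α) :
    fromBlocks 0 M N Q =
      (fromBlocks N Q 0 M).submatrix (Equiv.sumComm n n) (Equiv.refl (n ⊕ n)) :=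
  (fromBlocks_submatrix_sum_swap_left N Q 0 M id).symm

variable [Fintype n] [DecidableEq n] [CommRing α]

theorem nonsing_inv_neg (M : Matrix n n α) : (-M)⁻¹ = -M⁻¹ := by
  by_cases hM : IsUnit M.det
  · exact inv_eq_right_inv (by rw [neg_mul_neg, mul_nonsing_inv M hM])
  · have h_neg : ¬IsUnit (-M).det := by
      rwa [← isUnit_iff_isUnit_det, IsUnit.neg_iff, isUnit_iff_isUnit_det]
    rw [nonsing_inv_apply_not_isUnit _ h_neg, nonsing_inv_apply_not_isUnit _ hM, neg_zero]

theorem isUnit_fromBlocks_zero₁₁ {M N Q : Matrix n n α} :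
    IsUnit (fromBlocks 0 M N Q) ↔ IsUnit M ∧ IsUnit N := by
  rw [fromBlocks_zero₁₁_eq_submatrix, isUnit_submatrix_equiv, isUnit_fromBlocks_zero₂₁, and_comm]

theorem inv_fromBlocks_zero₁₁_of_isUnit_iff (M N Q : Matrix n n α) (hMN : IsUnit M ↔ IsUnit N) :
    (fromBlocks 0 M N Q)⁻¹ = fromBlocks (-(N⁻¹ * Q * M⁻¹)) N⁻¹ M⁻¹ 0 := by
  rw [fromBlocks_zero₁₁_eq_submatrix, inv_submatrix_equiv,
    inv_fromBlocks_zero₂₁_of_isUnit_iff _ _ _ hMN.symm]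
  exact fromBlocks_submatrix_sum_swap_right _ _ _ _ id

theorem schur_complement_fromBlocks_zero₁₁ [Fintype p] [DecidableEq p] [Fintype q] [DecidableEq q]
    (M N Q : Matrix n n α) (hMN : IsUnit M ↔ IsUnit N)
    (U V : Matrix p n α) (B C : Matrix n q α) (R : Matrix p q α) :
    R - fromCols U V * (fromBlocks 0 M N Q)⁻¹ * fromRows B C =
      fromCols (-(U * N⁻¹)) (1 : Matrix p p α) * fromBlocks Q C V R *
        fromRows (-(M⁻¹ * B)) (1 : Matrix q q α) := by
  rw [inv_fromBlocks_zero₁₁_of_isUnit_iff M N Q hMN]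
  simp only [fromCols_mul_fromBlocks, fromCols_mul_fromRows, Matrix.mul_neg, Matrix.neg_mul,
    Matrix.add_mul, Matrix.one_mul, Matrix.mul_one, Matrix.mul_zero, Matrix.mul_assoc, add_zero]
  abel

end

/-- The Popov (spectral density) function `Φ(s)`, which the Schur complement computes.
The conjugate transpose puts `star s` in the left factor; the value is junk when `s • 1 - A` is not
invertible. -/
noncomputable def popovFunction
    {n m α : Type*} [Fintype n] [DecidableEq n] [Fintype m] [DecidableEq m]
    [CommRing α] [StarRing α] (A Q : Matrix n n α) (B C : Matrix n m α) (R : Matrix m m α)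
    (s : α) : Matrix m m α :=
  (fromRows ((s • 1 - A)⁻¹ * B) (1 : Matrix m m α))ᴴ * fromBlocks Q C Cᴴ R *
    fromRows ((s • 1 - A)⁻¹ * B) (1 : Matrix m m α)

theorem schur_complement_eq_popov_general
    {n m α : Type*} [Fintype n] [DecidableEq n] [Fintype m] [DecidableEq m]
    [CommRing α] [StarRing α] (A Q : Matrix n n α) (B C : Matrix n m α) (R : Matrix m m α)
    (s : α) (hs : IsUnit (s • 1 - A)) :
    IsUnit (fromBlocks 0 (A - s • 1) (Aᴴ - star s • 1) Q) ∧
    R - fromCols Bᴴ Cᴴ * (fromBlocks 0 (A - s • 1) (Aᴴ - star s • 1) Q)⁻¹ * fromRows B C =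
      popovFunction A Q B C R s := by
  have h_star : Aᴴ - star s • 1 = (A - s • 1)ᴴ := by simp
  have h_unit : IsUnit (A - s • 1) := by rwa [← neg_sub, IsUnit.neg_iff]
  have h_unit_star : IsUnit (A - s • 1)ᴴ := h_unit.star
  have h_resolvent : (s • 1 - A)⁻¹ * B = -((A - s • 1)⁻¹ * B) := by
    rw [← neg_sub A, nonsing_inv_neg, Matrix.neg_mul]
  rw [h_star]
  refine ⟨isUnit_fromBlocks_zero₁₁.2 ⟨h_unit, h_unit_star⟩, ?_⟩
  rw [schur_complement_fromBlocks_zero₁₁ _ _ _ (iff_of_true h_unit h_unit_star), popovFunction,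
    h_resolvent, conjTranspose_fromRows_eq_fromCols_conjTranspose, conjTranspose_neg,
    conjTranspose_mul, conjTranspose_nonsing_inv, conjTranspose_one]

/-- For real `γ` not an eigenvalue of `A`, the matrix `Ã = [[0, A − γI], [Aᴴ − γI, Q]]`
is invertible and the Schur complement `R − [Bᴴ Cᴴ] Ã⁻¹ [B; C]` equals the Popov
function `Φ(γ)`. -/
theorem schur_complement_eq_popov
    (n m : ℕ) (hn : 0 < n) (hm : 0 < m)
    (A Q : Matrix (Fin n) (Fin n) ℂ) (B C : Matrix (Fin n) (Fin m) ℂ)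
    (R : Matrix (Fin m) (Fin m) ℂ) (hQ : Qᴴ = Q) (hR : Rᴴ = R)
    (γ : ℝ) (hγ : IsUnit ((γ : ℂ) • (1 : Matrix (Fin n) (Fin n) ℂ) - A)) :
    IsUnit (fromBlocks (0 : Matrix (Fin n) (Fin n) ℂ)
        (A - (γ : ℂ) • (1 : Matrix (Fin n) (Fin n) ℂ))
        (Aᴴ - (γ : ℂ) • (1 : Matrix (Fin n) (Fin n) ℂ)) Q) ∧
    R - fromCols Bᴴ Cᴴ *
          (fromBlocks (0 : Matrix (Fin n) (Fin n) ℂ)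
            (A - (γ : ℂ) • (1 : Matrix (Fin n) (Fin n) ℂ))
            (Aᴴ - (γ : ℂ) • (1 : Matrix (Fin n) (Fin n) ℂ)) Q)⁻¹ *
          fromRows B C =
      (fromRows (((γ : ℂ) • (1 : Matrix (Fin n) (Fin n) ℂ) - A)⁻¹ * B)
          (1 : Matrix (Fin m) (Fin m) ℂ))ᴴ *
        fromBlocks Q C Cᴴ R *
        fromRows (((γ : ℂ) • (1 : Matrix (Fin n) (Fin n) ℂ) - A)⁻¹ * B)
          (1 : Matrix (Fin m) (Fin m) ℂ) := by
  simpa only [popovFunction, Complex.star_def, Complex.conj_ofReal] using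
    schur_complement_eq_popov_general A Q B C R (γ : ℂ) hγ
end
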